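/- arXiv:1901.06945 — 2 statements merged into one kernel-verified Lean document; each statement's English description precedes it below -/
import Mathlib

section
/- Consider cliques in Γ_1, i.e. sets of roots whose pairwise dot products all equal 1. (i) Every maximal clique in Γ_1 has size 7 or 8. (ii) The cliques of size 7 in Γ_1 form exactly two orbits under the Weyl group W: the non-maximal ones, of which there are 138240, and the maximal ones, of which there are 69120; a clique of size 7 in Γ_1 is maximal if and only if the sum of its elements lies in 2Λ. (iii) There are exactly 17280 cliques of size 8 in Γ_1. -/
noncomputable section

/-- The standard dot product on ℝ^8. -/
def dot (a b : Fin 8 → ℝ) : ℝ := ∑ i, a i * b i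

/-- Membership in the E8 lattice Λ: all coordinates are integers or all lie in ℤ + 1/2,
and the coordinates sum to an even integer. -/
def inLambda (a : Fin 8 → ℝ) : Prop :=
  ((∀ i, ∃ n : ℤ, a i = n) ∨ (∀ i, ∃ n : ℤ, a i = n + 1 / 2)) ∧
    ∃ n : ℤ, (∑ i, a i) = 2 * n

/-- The E8 root system E: lattice vectors of squared norm 2. -/
def isRoot (a : Fin 8 → ℝ) : Prop := inLambda a ∧ dot a a = 2

/-- The Weyl group W: linear isometries of ℝ^8 mapping the root system E onto itself. -/
def IsWeyl (w : (Fin 8 → ℝ) ≃ₗ[ℝ] (Fin 8 → ℝ)) : Prop :=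
  (∀ a b : Fin 8 → ℝ, dot (w a) (w b) = dot a b) ∧
    (⇑w '' {a | isRoot a} = {a | isRoot a})

/-- A clique in the colored graph `Γ_c`: a set of roots whose pairwise dot products
lie in the color set `c`. -/
def IsClique (c : Set ℝ) (K : Finset (Fin 8 → ℝ)) : Prop :=
  (∀ e ∈ K, isRoot e) ∧ ∀ e ∈ K, ∀ f ∈ K, e ≠ f → dot e f ∈ c

/-- A maximal clique in `Γ_c`: a clique not properly contained in another clique. -/
def IsMaxClique (c : Set ℝ) (K : Finset (Fin 8 → ℝ)) : Prop :=
  IsClique c K ∧ ∀ K' : Finset (Fin 8 → ℝ), IsClique c K' → K ⊆ K' → K' = K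


abbrev V8 := Fin 8 → ℝ

def dotL (l m : List ℤ) : ℤ := (List.zipWith (· * ·) l m).sum

def tuples : ℕ → List ℤ → List (List ℤ)
  | 0, _ => [[]]
  | n + 1, A => (tuples n A).flatMap fun l => A.map fun a => a :: l

theorem mem_tuples (n : ℕ) (A l : List ℤ) :
    l ∈ tuples n A ↔ l.length = n ∧ ∀ x ∈ l, x ∈ A := by
  induction n generalizing l with
  | zero => 
    simp only [tuples, List.mem_singleton]
    constructor
    · rintro rfl; simp
    · rintro ⟨h, _⟩; exact List.length_eq_zero_iff.mp h
  | succ n ih =>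
    simp only [tuples, List.mem_flatMap, List.mem_map, ih]
    constructor
    · rintro ⟨t, ⟨h1, h2⟩, a, ha, rfl⟩
      refine ⟨by simp [h1], ?_⟩
      intro x hx
      rcases List.mem_cons.mp hx with rfl | hx
      · exact ha
      · exact h2 x hx
    · rintro ⟨h1, h2⟩
      cases l with
      | nil => simp at h1
      | cons a t =>
        exact ⟨t, ⟨by simpa using h1, fun x hx => h2 x (by simp [hx])⟩, a, h2 a (by simp), rfl⟩

def intTup : ℕ → ℕ → List (List ℤ)
  | 0, 0 => [[]]
  | 0, _ + 1 => []
  | n + 1, 0 => (intTup n 0).map (0 :: ·)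
  | n + 1, b + 1 => (intTup n (b + 1)).map (0 :: ·) ++
      ((intTup n b).map (2 :: ·) ++ (intTup n b).map (-2 :: ·))

theorem dotL_cons (a b : ℤ) (l m : List ℤ) : dotL (a :: l) (b :: m) = a * b + dotL l m := by
  simp [dotL]

theorem dotL_self_nonneg (l : List ℤ) : 0 ≤ dotL l l := by
  induction l with
  | nil => simp [dotL]
  | cons a t ih => rw [dotL_cons]; nlinarith

theorem mem_intTup (n b : ℕ) (l : List ℤ) :
    l ∈ intTup n b ↔ l.length = n ∧ (∀ x ∈ l, x = 0 ∨ x = 2 ∨ x = -2) ∧ dotL l l = 4 * b := by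
  induction n generalizing l b with
  | zero =>
    cases b with
    | zero =>
      simp only [intTup, List.mem_singleton]
      constructor
      · rintro rfl; simp [dotL]
      · rintro ⟨h, _⟩; exact List.length_eq_zero_iff.mp h
    | succ b =>
      simp only [intTup, List.not_mem_nil, false_iff]
      rintro ⟨h, -, h2⟩
      rw [List.length_eq_zero_iff] at h
      subst h
      simp [dotL] at h2
      omega
  | succ n ih =>
    cases l with
    | nil => cases b <;> simp [intTup]
    | cons a t =>
      have h0 := dotL_self_nonneg t
      cases b with
      | zero =>
        simp only [intTup, List.mem_map, ih, dotL_cons, List.cons.injEq, List.mem_cons,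
          List.length_cons]
        constructor
        · rintro ⟨t, ⟨h1, h2, h3⟩, rfl, rfl⟩
          refine ⟨by omega, ?_, by simpa using h3⟩
          rintro x (rfl | hx)
          · simp
          · exact h2 x hx
        · rintro ⟨h1, h2, h3⟩
          refine ⟨t, ⟨by omega, fun x hx => h2 x (Or.inr hx), ?_⟩, ?_, rfl⟩ <;>
          rcases h2 a (Or.inl rfl) with rfl | rfl | rfl <;> push_cast at * <;> omega
      | succ b =>
        simp only [intTup, List.mem_append, List.mem_map, ih, dotL_cons, List.cons.injEq,
          List.mem_cons, List.length_cons]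
        constructor
        · rintro (⟨t, ⟨h1, h2, h3⟩, rfl, rfl⟩ | ⟨t, ⟨h1, h2, h3⟩, rfl, rfl⟩ |
            ⟨t, ⟨h1, h2, h3⟩, rfl, rfl⟩)
          all_goals
            refine ⟨by omega, ?_, by push_cast at *; omega⟩
            rintro x (rfl | hx)
            · simp
            · exact h2 x hx
        · rintro ⟨h1, h2, h3⟩
          have h4 : ∀ x ∈ t, x = 0 ∨ x = 2 ∨ x = -2 := fun x hx => h2 x (Or.inr hx)
          rcases h2 a (Or.inl rfl) with rfl | rfl | rfl
          · exact Or.inl ⟨t, ⟨by omega, h4, by push_cast at *; omega⟩, rfl, rfl⟩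
          · exact Or.inr (Or.inl ⟨t, ⟨by omega, h4, by push_cast at *; omega⟩, rfl, rfl⟩)
          · exact Or.inr (Or.inr ⟨t, ⟨by omega, h4, by push_cast at *; omega⟩, rfl, rfl⟩)

def rootList : List (List ℤ) :=
  intTup 8 2 ++
  (tuples 8 [-1, 1]).filter (fun l => decide (l.sum % 4 = 0))

def nb (S : List (List ℤ)) : List (List ℤ) :=
  rootList.filter fun x => S.all fun y => decide (dotL x y = 4)

def SS : List (List ℤ) :=
  [[2,2,0,0,0,0,0,0],[2,0,2,0,0,0,0,0],[2,0,0,2,0,0,0,0],[2,0,0,0,2,0,0,0],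
   [2,0,0,0,0,2,0,0],[2,0,0,0,0,0,2,0]]

def va : List ℤ := [2,0,0,0,0,0,0,-2]
def vb : List ℤ := [2,0,0,0,0,0,0,2]
def vc : List ℤ := [1,1,1,1,1,1,1,1]

/-- elements of `N` adjacent to some element of `R` -/
def grow (N R : List (List ℤ)) : List (List ℤ) :=
  N.filter fun x => R.any fun y => decide (dotL x y = 4)

theorem intTup_nodup (n b : ℕ) : (intTup n b).Nodup := by
  have hi : ∀ a : ℤ, Function.Injective (fun l : List ℤ => a :: l) := fun a x y h => by
    simpa using h
  induction n generalizing b with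
  | zero => cases b <;> simp [intTup]
  | succ n ih =>
    cases b with
    | zero => exact (ih 0).map (hi 0)
    | succ b =>
      refine List.Nodup.append ((ih _).map (hi 0))
        (List.Nodup.append ((ih _).map (hi 2)) ((ih _).map (hi (-2))) ?_) ?_
      · intro x h1 h2
        simp only [List.mem_map] at h1 h2
        obtain ⟨u, -, rfl⟩ := h1
        obtain ⟨v, -, h⟩ := h2
        simp at h
      · intro x h1 h2
        simp only [List.mem_map, List.mem_append] at h1 h2
        obtain ⟨u, -, rfl⟩ := h1
        rcases h2 with ⟨v, -, h⟩ | ⟨v, -, h⟩ <;> simp at h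

theorem tuples_nodup (n : ℕ) (A : List ℤ) (hA : A.Nodup) : (tuples n A).Nodup := by
  induction n with
  | zero => simp [tuples]
  | succ n ih =>
    rw [tuples, List.nodup_flatMap]
    refine ⟨fun l _ => hA.map fun x y h => by simpa using h, ?_⟩
    refine ih.imp ?_
    intro l m hlm x h1 h2
    simp only [List.mem_map] at h1 h2
    obtain ⟨u, -, rfl⟩ := h1
    obtain ⟨v, -, h⟩ := h2
    simp at h
    exact hlm h.2.symm

theorem root_nodup : rootList.Nodup := by
  refine List.Nodup.append (intTup_nodup _ _) ((tuples_nodup _ _ (by decide)).filter _) ?_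
  intro x h1 h2
  rw [mem_intTup] at h1
  rw [List.mem_filter, mem_tuples] at h2
  cases x with
  | nil => simp at h1
  | cons a t =>
    have := h1.2.1 a (by simp)
    have := h2.1.2 a (by simp)
    simp at this
    omega
theorem nb_len : (List.range 7).map (fun k => (nb (SS.take k)).length) = [240, 56, 27, 16, 10, 6, 3] := by
  decide +kernel
theorem nb_sub : (nb SS).all (fun x => x == va || x == vb || x == vc) = true := by decide +kernel
theorem nb_mem : (va ∈ nb SS ∧ vb ∈ nb SS) ∧ vc ∈ nb SS := by decide +kernel
theorem nb_va : nb (va :: SS) = [] := by decide +kernel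
theorem nb_vb : nb (vb :: SS) = [vc] := by decide +kernel
theorem nb_vc : nb (vc :: SS) = [vb] := by decide +kernel
theorem conn : (List.range 6).all (fun k => 
    let N := nb (SS.take k)
    let G := grow N (grow N (grow N [SS.getD k []]))
    N.all fun x => decide (x ∈ G)) = true := by decide +kernel
theorem SS_mem : (List.range 6).all (fun k => decide (SS.getD k [] ∈ nb (SS.take k))) = true := by
  decide +kernel

def toR (l : List ℤ) : V8 := fun i => (l.getD i.val 0 : ℤ) / 2

theorem len8 {l : List ℤ} (h : l.length = 8) : ∃ a b c d e f g i, l = [a,b,c,d,e,f,g,i] := by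
  match l, h with
  | [a,b,c,d,e,f,g,i], _ => exact ⟨a,b,c,d,e,f,g,i,rfl⟩

theorem dot_toR {l m : List ℤ} (hl : l.length = 8) (hm : m.length = 8) :
    dot (toR l) (toR m) = (dotL l m : ℤ) / 4 := by
  obtain ⟨a,b,c,d,e,f,g,i,rfl⟩ := len8 hl
  obtain ⟨a',b',c',d',e',f',g',i',rfl⟩ := len8 hm
  simp [dot, toR, dotL, Fin.sum_univ_eight]
  ring

theorem toR_inj {l m : List ℤ} (hl : l.length = 8) (hm : m.length = 8) (h : toR l = toR m) :
    l = m := by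
  apply List.ext_getElem (by omega)
  intro i h1 h2
  have := congrFun h ⟨i, by omega⟩
  simp only [toR] at this
  rw [List.getD_eq_getElem _ _ h1, List.getD_eq_getElem _ _ h2] at this
  have h3 : ((l[i] : ℤ) : ℝ) = (m[i] : ℤ) := by linarith
  exact_mod_cast h3

theorem rootList_len {l : List ℤ} (h : l ∈ rootList) : l.length = 8 := by
  rcases List.mem_append.mp h with h | h
  · exact ((mem_intTup _ _ _).mp h).1
  · exact ((mem_tuples _ _ _).mp (List.mem_filter.mp h).1).1

theorem isRoot_toR {l : List ℤ} (h : l ∈ rootList) : isRoot (toR l) := by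
  have h8 := rootList_len h
  have hd := dot_toR h8 h8
  rcases List.mem_append.mp h with h | h
  · obtain ⟨-, h1, h2⟩ := (mem_intTup _ _ _).mp h
    rw [h2] at hd
    refine ⟨⟨Or.inl ?_, ?_⟩, by rw [hd]; norm_num⟩
    · intro i
      have hi : (i : ℕ) < l.length := by omega
      refine ⟨l.getD i.val 0 / 2, ?_⟩
      simp only [toR]
      rw [List.getD_eq_getElem _ _ hi]
      rcases h1 _ (List.getElem_mem hi) with h | h | h <;> rw [h] <;> norm_num
    · obtain ⟨a,b,c,d,e,f,g,i,rfl⟩ := len8 h8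
      simp only [List.mem_cons, List.not_mem_nil, or_false, forall_eq_or_imp, forall_eq] at h1
      have key : ∀ x : ℤ, x = 0 ∨ x = 2 ∨ x = -2 → ∃ y, x = 2 * y ∧ x * x = 4 * y + 8 * (y * (y-1) / 2) := by
        rintro x (rfl | rfl | rfl)
        · exact ⟨0, by norm_num⟩
        · exact ⟨1, by norm_num⟩
        · exact ⟨-1, by norm_num⟩
      obtain ⟨p1, p2, p3, p4, p5, p6, p7, p8⟩ := h1
      obtain ⟨a', ha, ha'⟩ := key a p1
      obtain ⟨b', hb, hb'⟩ := key b p2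
      obtain ⟨c', hc, hc'⟩ := key c p3
      obtain ⟨d', hd, hd'⟩ := key d p4
      obtain ⟨e', he, he'⟩ := key e p5
      obtain ⟨f', hf, hf'⟩ := key f p6
      obtain ⟨g', hg, hg'⟩ := key g p7
      obtain ⟨i', hi, hi'⟩ := key i p8
      simp only [dotL, List.zipWith_cons_cons, List.zipWith_nil_left, List.sum_cons, List.sum_nil] at h2
      have : ∃ n, a + b + c + d + e + f + g + i = 4 * n :=
        ⟨(a + b + c + d + e + f + g + i) / 4, by omega⟩
      obtain ⟨n, hn⟩ := this
      refine ⟨n, ?_⟩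
      have hn' : (a + b + c + d + e + f + g + i : ℝ) = 4 * n := by exact_mod_cast hn
      simp [toR, Fin.sum_univ_eight]
      linarith
  · obtain ⟨h0, h2⟩ := List.mem_filter.mp h
    obtain ⟨-, h1⟩ := (mem_tuples _ _ _).mp h0
    simp only [decide_eq_true_eq] at h2
    simp only [List.mem_cons, List.not_mem_nil, or_false] at h1
    refine ⟨⟨Or.inr ?_, ?_⟩, ?_⟩
    · intro i
      have hi : (i : ℕ) < l.length := by omega
      simp only [toR]
      rw [List.getD_eq_getElem _ _ hi]
      rcases h1 _ (List.getElem_mem hi) with h | h <;> rw [h]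
      · exact ⟨-1, by norm_num⟩
      · exact ⟨0, by norm_num⟩
    · obtain ⟨a,b,c,d,e,f,g,i,rfl⟩ := len8 h8
      refine ⟨[a,b,c,d,e,f,g,i].sum / 4, ?_⟩
      have : (([a,b,c,d,e,f,g,i].sum : ℤ) : ℝ) = 4 * (([a,b,c,d,e,f,g,i].sum / 4 : ℤ) : ℝ) := by
        have : [a,b,c,d,e,f,g,i].sum = 4 * ([a,b,c,d,e,f,g,i].sum / 4) := by omega
        exact_mod_cast this
      have h3 : (∑ j, toR [a,b,c,d,e,f,g,i] j) = (([a,b,c,d,e,f,g,i].sum : ℤ) : ℝ) / 2 := by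
        simp [toR, Fin.sum_univ_eight]; ring
      rw [h3, this]; ring
    · rw [hd]
      have : dotL l l = 8 := by
        obtain ⟨a,b,c,d,e,f,g,i,rfl⟩ := len8 h8
        simp only [List.mem_cons, List.not_mem_nil, or_false, forall_eq_or_imp, forall_eq] at h1
        have key : ∀ x : ℤ, x = -1 ∨ x = 1 → x * x = 1 := by rintro x (rfl | rfl) <;> rfl
        obtain ⟨p1, p2, p3, p4, p5, p6, p7, p8⟩ := h1
        simp [dotL, key _ p1, key _ p2, key _ p3, key _ p4, key _ p5, key _ p6, key _ p7, key _ p8]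
      rw [this]; norm_num

theorem exists_toR {x : V8} (hx : isRoot x) : ∃ l ∈ rootList, x = toR l := by
  obtain ⟨⟨h | h, n, hn⟩, hd⟩ := hx
  · choose m hm using h
    have hx : x = fun i => (m i : ℝ) := funext hm
    subst hx
    have hd' : ∑ i, m i * m i = 2 := by
      simp only [dot] at hd; exact_mod_cast hd
    have hb : ∀ i, m i = 0 ∨ m i = 1 ∨ m i = -1 := by
      intro i
      have := Finset.single_le_sum (f := fun i => m i * m i) (fun i _ => mul_self_nonneg _)
        (Finset.mem_univ i)
      simp only [hd'] at this
      have h1 : m i ≤ 1 := by nlinarith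
      have h2 : -1 ≤ m i := by nlinarith
      omega
    refine ⟨List.ofFn fun i => 2 * m i, ?_, ?_⟩
    · apply List.mem_append_left
      rw [mem_intTup]
      refine ⟨by simp, ?_, ?_⟩
      · intro y hy
        rw [List.mem_ofFn] at hy
        obtain ⟨i, rfl⟩ := hy
        have := hb i; omega
      · rw [Fin.sum_univ_eight] at hd'
        simp [dotL, List.ofFn_succ]
        linarith
    · funext i
      fin_cases i <;> simp [toR]
  · choose m hm using h
    have hx : x = fun i => (m i : ℝ) + 1 / 2 := funext hm
    subst hx
    have hd' : ∑ i, (2 * m i + 1) * (2 * m i + 1) = 8 := by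
      have : (∑ i, (2 * (m i : ℝ) + 1) * (2 * m i + 1)) = 8 := by
        have h2 : (∑ i, (2 * (m i : ℝ) + 1) * (2 * m i + 1)) = 4 * dot (fun i => (m i : ℝ) + 1 / 2) (fun i => (m i : ℝ) + 1 / 2) := by
          rw [dot, Finset.mul_sum]
          exact Finset.sum_congr rfl fun i _ => by ring
        rw [h2, hd]; norm_num
      exact_mod_cast this
    have hb : ∀ i, 2 * m i + 1 = -1 ∨ 2 * m i + 1 = 1 := by
      intro i
      have h0 : ∀ i, 0 ≤ (2 * m i + 1) * (2 * m i + 1) - 1 := fun i => by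
        have : 0 ≤ m i * (m i + 1) := by
          rcases le_or_gt 0 (m i) with h | h
          · positivity
          · nlinarith
        linarith
      have := Finset.single_le_sum (f := fun i => (2 * m i + 1) * (2 * m i + 1) - 1)
        (fun i _ => h0 i) (Finset.mem_univ i)
      rw [Finset.sum_sub_distrib, hd'] at this
      simp at this
      have h1 : m i ≤ 0 := by nlinarith
      have h2 : -1 ≤ m i := by nlinarith
      omega
    refine ⟨List.ofFn fun i => 2 * m i + 1, ?_, ?_⟩
    · apply List.mem_append_right
      rw [List.mem_filter, mem_tuples]
      refine ⟨⟨by simp, ?_⟩, ?_⟩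
      · intro y hy
        rw [List.mem_ofFn] at hy
        obtain ⟨i, rfl⟩ := hy
        have := hb i; simp only [List.mem_cons, List.not_mem_nil, or_false]; omega
      · rw [decide_eq_true_eq, List.sum_ofFn]
        have : ((∑ i, (2 * m i + 1) : ℤ) : ℝ) = ((4 * n : ℤ) : ℝ) := by
          push_cast
          have : (∑ i, (2 * (m i : ℝ) + 1)) = 2 * ∑ i, ((m i : ℝ) + 1 / 2) := by
            rw [Finset.mul_sum]
            exact Finset.sum_congr rfl fun i _ => by ring
          rw [this, hn]; ring
        have h2 : (∑ i, (2 * m i + 1) : ℤ) = 4 * n := by exact_mod_cast this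
        omega
    · funext i
      fin_cases i <;> simp [toR] <;> ring

/-- common neighbours -/
def NB (K : Set V8) : Set V8 := {x | isRoot x ∧ ∀ y ∈ K, dot x y = 1}

def setR (S : List (List ℤ)) : Set V8 := {v | ∃ s ∈ S, toR s = v}

theorem NB_setR (S : List (List ℤ)) (hS : ∀ s ∈ S, s.length = 8) : NB (setR S) = setR (nb S) := by
  ext x
  constructor
  · rintro ⟨hx, h⟩
    obtain ⟨l, hl, rfl⟩ := exists_toR hx
    refine ⟨l, List.mem_filter.mpr ⟨hl, ?_⟩, rfl⟩
    rw [List.all_eq_true]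
    intro s hs
    have := h _ ⟨s, hs, rfl⟩
    rw [dot_toR (rootList_len hl) (hS s hs)] at this
    have h2 : (dotL l s : ℝ) = 4 := by linarith
    simp only [decide_eq_true_eq]; exact_mod_cast h2
  · rintro ⟨l, hl, rfl⟩
    obtain ⟨hl, h⟩ := List.mem_filter.mp hl
    refine ⟨isRoot_toR hl, ?_⟩
    rintro _ ⟨s, hs, rfl⟩
    rw [dot_toR (rootList_len hl) (hS s hs)]
    rw [List.all_eq_true] at h
    have := h s hs
    simp only [decide_eq_true_eq] at this
    rw [this]; norm_num

theorem nb_root {S : List (List ℤ)} {l} (h : l ∈ nb S) : l ∈ rootList := (List.mem_filter.mp h).1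

theorem setR_ncard (S : List (List ℤ)) : (setR (nb S)).ncard = (nb S).length := by
  have : setR (nb S) = ((nb S).toFinset.image toR : Finset V8) := by
    ext x; simp [setR]
  rw [this, Set.ncard_coe_finset, Finset.card_image_of_injOn, List.toFinset_card_of_nodup]
  · exact root_nodup.filter _
  · intro a ha b hb h
    simp at ha hb
    exact toR_inj (rootList_len (nb_root ha)) (rootList_len (nb_root hb)) h

theorem roots_finite : {x : V8 | isRoot x}.Finite := by
  refine Set.Finite.subset (rootList.toFinset.image toR).finite_toSet ?_
  intro x hx
  obtain ⟨l, hl, rfl⟩ := exists_toR hx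
  simp only [Finset.coe_image, Set.mem_image, SetLike.mem_coe, List.mem_toFinset]
  exact ⟨l, hl, rfl⟩

theorem dot_comm' (a b : V8) : dot a b = dot b a := by
  simp only [dot]; exact Finset.sum_congr rfl fun i _ => mul_comm _ _

theorem dot_add_left (a b c : V8) : dot (a + b) c = dot a c + dot b c := by
  simp only [dot, Pi.add_apply, add_mul, Finset.sum_add_distrib]

theorem dot_sub_left (a b c : V8) : dot (a - b) c = dot a c - dot b c := by
  simp only [dot, Pi.sub_apply, sub_mul, Finset.sum_sub_distrib]

theorem dot_smul_left (t : ℝ) (b c : V8) : dot (t • b) c = t * dot b c := by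
  simp only [dot, Pi.smul_apply, smul_eq_mul, Finset.mul_sum, mul_assoc]

theorem dot_sub_right (a b c : V8) : dot c (a - b) = dot c a - dot c b := by
  rw [dot_comm', dot_sub_left, dot_comm' a, dot_comm' b]

theorem dot_smul_right (t : ℝ) (b c : V8) : dot c (t • b) = t * dot c b := by
  rw [dot_comm', dot_smul_left, dot_comm' b]

theorem inLambda_iff (a : V8) : inLambda a ↔
    ∃ (p : Fin 8 → ℤ) (c n : ℤ), (∀ i, a i = p i + c / 2) ∧ ∑ i, a i = 2 * n := by
  constructor
  · rintro ⟨h | h, n, hn⟩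
    · choose p hp using h
      exact ⟨p, 0, n, fun i => by simp [hp], hn⟩
    · choose p hp using h
      exact ⟨p, 1, n, fun i => by simp [hp], hn⟩
  · rintro ⟨p, c, n, h, hn⟩
    refine ⟨?_, n, hn⟩
    rcases Int.even_or_odd' c with ⟨d, rfl | rfl⟩
    · left
      intro i
      refine ⟨p i + d, ?_⟩
      rw [h]; push_cast; ring
    · right
      intro i
      refine ⟨p i + d, ?_⟩
      rw [h]; push_cast; ring

theorem inLambda_sub {a b : V8} (ha : inLambda a) (hb : inLambda b) (t : ℤ) :
    inLambda (a - (t : ℝ) • b) := by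
  rw [inLambda_iff] at *
  obtain ⟨p, c, n, h, hn⟩ := ha
  obtain ⟨q, d, m, g, hm⟩ := hb
  refine ⟨fun i => p i - t * q i, c - t * d, n - t * m, ?_, ?_⟩
  · intro i
    simp only [Pi.sub_apply, Pi.smul_apply, smul_eq_mul, h, g]
    push_cast; ring
  · simp only [Pi.sub_apply, Pi.smul_apply, smul_eq_mul, Finset.sum_sub_distrib, ← Finset.mul_sum,
      hn, hm]
    push_cast; ring

theorem dot_int {a b : V8} (ha : inLambda a) (hb : inLambda b) : ∃ n : ℤ, dot a b = n := by
  rw [inLambda_iff] at *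
  obtain ⟨p, c, n, h, hn⟩ := ha
  obtain ⟨q, d, m, g, hm⟩ := hb
  refine ⟨(∑ i, p i * q i) + d * (n - 2 * c) + c * (m - 2 * d) + 2 * c * d, ?_⟩
  simp only [Fin.sum_univ_eight, h, g] at hn hm
  simp only [dot, Fin.sum_univ_eight, h, g]
  push_cast
  linear_combination (d / 2 : ℝ) * hn + (c / 2 : ℝ) * hm

def Good (w : V8 ≃ₗ[ℝ] V8) : Prop :=
  (∀ a b, dot (w a) (w b) = dot a b) ∧ ∀ a, inLambda (w a) ↔ inLambda a

theorem Good.refl : Good (LinearEquiv.refl ℝ V8) := ⟨fun _ _ => rfl, fun _ => Iff.rfl⟩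

theorem Good.trans {u w : V8 ≃ₗ[ℝ] V8} (hu : Good u) (hw : Good w) : Good (u.trans w) :=
  ⟨fun a b => by simp [hw.1, hu.1], fun a => by simp [hw.2, hu.2]⟩

theorem Good.symm {u : V8 ≃ₗ[ℝ] V8} (hu : Good u) : Good u.symm :=
  ⟨fun a b => by rw [← hu.1]; simp, fun a => by rw [← hu.2]; simp⟩

theorem Good.weyl {w : V8 ≃ₗ[ℝ] V8} (h : Good w) : IsWeyl w := by
  refine ⟨h.1, ?_⟩
  ext x
  simp only [Set.mem_image, Set.mem_ofPred_eq]
  constructor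
  · rintro ⟨y, hy, rfl⟩
    exact ⟨(h.2 y).mpr hy.1, by rw [h.1]; exact hy.2⟩
  · intro hx
    refine ⟨w.symm x, ⟨(h.2 _).mp (by simpa using hx.1), ?_⟩, by simp⟩
    rw [← h.1]; simpa using hx.2

theorem weyl_root {w : V8 ≃ₗ[ℝ] V8} (h : IsWeyl w) (x : V8) : isRoot (w x) ↔ isRoot x := by
  constructor
  · intro hx
    have : w x ∈ ⇑w '' {a | isRoot a} := by rw [h.2]; exact hx
    obtain ⟨y, hy, e⟩ := this
    rw [← w.injective e]; exact hy
  · intro hx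
    have : w x ∈ ⇑w '' {a | isRoot a} := ⟨x, hx, rfl⟩
    rw [h.2] at this; exact this

theorem NB_image {w : V8 ≃ₗ[ℝ] V8} (h : IsWeyl w) (K : Set V8) : NB (w '' K) = w '' NB K := by
  ext x
  constructor
  · rintro ⟨hx, hk⟩
    refine ⟨w.symm x, ⟨(weyl_root h _).mp (by simpa using hx), ?_⟩, by simp⟩
    intro y hy
    rw [← h.1]; simpa using hk _ ⟨y, hy, rfl⟩
  · rintro ⟨x, ⟨hx, hk⟩, rfl⟩
    refine ⟨(weyl_root h _).mpr hx, ?_⟩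
    rintro _ ⟨y, hy, rfl⟩
    rw [h.1]; exact hk y hy

theorem exists_refl {r : V8} (hr : isRoot r) :
    ∃ w : V8 ≃ₗ[ℝ] V8, Good w ∧ ∀ a, w a = a - dot a r • r := by
  let f : V8 →ₗ[ℝ] V8 :=
    { toFun := fun a => a - dot a r • r
      map_add' := fun a b => by simp only [dot_add_left, add_smul]; abel
      map_smul' := fun t a => by
        simp only [dot_smul_left, RingHom.id_apply, smul_sub, smul_smul] }
  have hf : ∀ a, f a = a - dot a r • r := fun _ => rfl
  have hinv : Function.Involutive f := by
    intro a
    rw [hf (f a), hf a, dot_sub_left, dot_smul_left, hr.2, sub_sub, ← add_smul]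
    rw [show dot a r + (dot a r - dot a r * 2) = 0 by ring, zero_smul, sub_zero]
  have hd : ∀ a b, dot (f a) (f b) = dot a b := by
    intro a b
    rw [hf, hf]
    simp only [dot_sub_left, dot_smul_left, dot_sub_right, dot_smul_right, hr.2, dot_comm' r]
    ring
  have hl : ∀ a, inLambda a → inLambda (f a) := by
    intro a ha
    obtain ⟨n, hn⟩ := dot_int ha hr.1
    rw [hf, hn]
    exact inLambda_sub ha hr.1 n
  refine ⟨LinearEquiv.ofInvolutive f hinv, ⟨hd, fun a => ⟨fun h => ?_, hl a⟩⟩, hf⟩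
  have := hl _ h
  change inLambda (f (f a)) at this
  rwa [hinv a] at this

def Conn (K : Set V8) (x y : V8) : Prop :=
  ∃ w : V8 ≃ₗ[ℝ] V8, Good w ∧ (∀ k ∈ K, w k = k) ∧ w x = y

theorem Conn.refl (K : Set V8) (x : V8) : Conn K x x := ⟨_, Good.refl, fun _ _ => rfl, rfl⟩

theorem Conn.trans {K : Set V8} {x y z : V8} (h : Conn K x y) (h' : Conn K y z) : Conn K x z := by
  obtain ⟨u, hu, hu1, hu2⟩ := h
  obtain ⟨w, hw, hw1, hw2⟩ := h'
  refine ⟨u.trans w, hu.trans hw, fun k hk => ?_, ?_⟩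
  · simp [hu1 k hk, hw1 k hk]
  · simp [hu2, hw2]

theorem Conn.step {K : Set V8} {x y : V8} (hx : x ∈ NB K) (hy : y ∈ NB K) (h : dot x y = 1) :
    Conn K x y := by
  have hr : isRoot (x - y) := by
    refine ⟨?_, ?_⟩
    · have := inLambda_sub hx.1.1 hy.1.1 1
      simpa using this
    · simp only [dot_sub_left, dot_sub_right, hx.1.2, hy.1.2, h, dot_comm' y x]; norm_num
  obtain ⟨w, hw, hw'⟩ := exists_refl hr
  refine ⟨w, hw, fun k hk => ?_, ?_⟩
  · rw [hw', dot_sub_right, dot_comm' k, dot_comm' k, hx.2 k hk, hy.2 k hk]; simp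
  · rw [hw', dot_sub_right, hx.1.2, h]
    norm_num

theorem grow_conn {S R : List (List ℤ)} (hS : ∀ s ∈ S, s.length = 8) {r : V8}
    (hR : ∀ x ∈ R, x ∈ nb S ∧ Conn (setR S) (toR x) r) :
    ∀ x ∈ grow (nb S) R, x ∈ nb S ∧ Conn (setR S) (toR x) r := by
  intro x hx
  obtain ⟨hx, h⟩ := List.mem_filter.mp hx
  rw [List.any_eq_true] at h
  obtain ⟨y, hy, h⟩ := h
  rw [decide_eq_true_eq] at h
  refine ⟨hx, Conn.trans (Conn.step ?_ ?_ ?_) (hR y hy).2⟩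
  · rw [NB_setR S hS]; exact ⟨x, hx, rfl⟩
  · rw [NB_setR S hS]; exact ⟨y, (hR y hy).1, rfl⟩
  · rw [dot_toR (rootList_len (nb_root hx)) (rootList_len (nb_root (hR y hy).1)), h]; norm_num

theorem SS_len : ∀ s ∈ SS, s.length = 8 := by decide

theorem take_len (k : ℕ) : ∀ s ∈ SS.take k, s.length = 8 := fun s hs =>
  SS_len s (List.mem_of_mem_take hs)

theorem nb_conn {k : ℕ} (hk : k < 6) {x : List ℤ} (hx : x ∈ nb (SS.take k)) :
    Conn (setR (SS.take k)) (toR x) (toR (SS.getD k [])) := by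
  have h1 := conn
  have h2 := SS_mem
  rw [List.all_eq_true] at h1 h2
  have h1 := h1 k (by simpa using hk)
  have h2 := h2 k (by simpa using hk)
  rw [decide_eq_true_eq] at h2
  simp only [List.all_eq_true, decide_eq_true_eq] at h1
  have hl := take_len k
  refine (grow_conn hl (grow_conn hl (grow_conn hl ?_)) x (h1 x hx)).2
  intro y hy
  rw [List.mem_singleton] at hy
  subst hy
  exact ⟨h2, Conn.refl _ _⟩

theorem setR_cons (x : List ℤ) (S) : setR (x :: S) = insert (toR x) (setR S) := by
  ext v
  simp [setR, eq_comm]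

theorem clique_mono {c : Set ℝ} {K L : Finset V8} (h : IsClique c L) (hKL : K ⊆ L) : IsClique c K :=
  ⟨fun e he => h.1 e (hKL he), fun e he f hf => h.2 e (hKL he) f (hKL hf)⟩

theorem clique_insert {K : Finset V8} (h : IsClique {1} K) {x : V8} :
    (x ∉ K ∧ IsClique {1} (insert x K)) ↔ x ∈ NB (K : Set V8) := by
  constructor
  · rintro ⟨hx, hc⟩
    refine ⟨hc.1 x (by simp), fun y hy => ?_⟩
    exact hc.2 x (by simp) y (by simp at hy; simp [hy]) (fun e => hx (by rw [e]; simpa using hy))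
  · rintro ⟨hx, hc⟩
    have hxK : x ∉ K := fun hxK => by
      have := hc x (by simpa using hxK)
      rw [hx.2] at this; norm_num at this
    refine ⟨hxK, ?_, ?_⟩
    · intro e he
      rcases Finset.mem_insert.mp he with rfl | he
      · exact hx
      · exact h.1 e he
    · intro e he f hf hne
      rcases Finset.mem_insert.mp he with he' | he' <;> rcases Finset.mem_insert.mp hf with hf' | hf'
      · exact absurd (he'.trans hf'.symm) hne
      · rw [he']; exact hc f (by simpa using hf')
      · rw [hf', dot_comm']; exact hc e (by simpa using he')
      · exact h.2 e he' f hf' hne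

theorem max_iff (K : Finset V8) : IsMaxClique {1} K ↔ IsClique {1} K ∧ NB (K : Set V8) = ∅ := by
  constructor
  · rintro ⟨h, hm⟩
    refine ⟨h, Set.eq_empty_iff_forall_notMem.mpr fun x hx => ?_⟩
    obtain ⟨h1, h2⟩ := (clique_insert h).mpr hx
    have := hm _ h2 (Finset.subset_insert _ _)
    exact h1 (Finset.insert_eq_self.mp this)
  · rintro ⟨h, hn⟩
    refine ⟨h, fun L hL hKL => ?_⟩
    by_contra hne
    obtain ⟨x, hx, hxK⟩ := Finset.exists_of_ssubset (Finset.ssubset_iff_subset_ne.mpr ⟨hKL, Ne.symm hne⟩)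
    have : x ∈ NB (K : Set V8) := (clique_insert h).mp
      ⟨hxK, clique_mono hL (Finset.insert_subset hx hKL)⟩
    rw [hn] at this
    exact this

theorem mem_NB_erase {K : Finset V8} (h : IsClique {1} K) {x : V8} (hx : x ∈ K) :
    x ∈ NB ((K.erase x : Finset V8) : Set V8) :=
  (clique_insert (clique_mono h (Finset.erase_subset _ _))).mp
    ⟨Finset.notMem_erase _ _, by rwa [Finset.insert_erase hx]⟩

theorem image_erase (K : Finset V8) {x : V8} (hx : x ∈ K) (w : V8 ≃ₗ[ℝ] V8) :
    w '' (K : Set V8) = insert (w x) (w '' ((K.erase x : Finset V8) : Set V8)) := by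
  rw [← Set.image_insert_eq, ← Finset.coe_insert, Finset.insert_erase hx]

theorem trans_aux {K : Finset V8} (h : IsClique {1} K) {x : V8} (hx : x ∈ K) {S : List (List ℤ)}
    (hS : ∀ s ∈ S, s.length = 8) {w : V8 ≃ₗ[ℝ] V8} (hw : Good w)
    (hwS : w '' ((K.erase x : Finset V8) : Set V8) = setR S) :
    ∃ l ∈ nb S, ∀ v, Conn (setR S) (toR l) v →
      ∃ u : V8 ≃ₗ[ℝ] V8, Good u ∧ u '' (K : Set V8) = insert v (setR S) := by
  have h1 : w x ∈ setR (nb S) := by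
    rw [← NB_setR S hS, ← hwS, NB_image hw.weyl]
    exact ⟨x, mem_NB_erase h hx, rfl⟩
  obtain ⟨l, hl, hlx⟩ := h1
  refine ⟨l, hl, fun v hv => ?_⟩
  obtain ⟨u, hu, hu1, hu2⟩ := hv
  refine ⟨w.trans u, hw.trans hu, ?_⟩
  have h2 : ∀ T : Set V8, (w.trans u) '' T = u '' (w '' T) := fun T => by
    rw [← Set.image_comp]; rfl
  rw [image_erase K hx, h2, hwS]
  have h3 : u '' setR S = setR S := by
    ext y
    constructor
    · rintro ⟨z, hz, rfl⟩; rw [hu1 z hz]; exact hz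
    · intro hy; exact ⟨y, hy, hu1 y hy⟩
  rw [h3, LinearEquiv.trans_apply, ← hlx, hu2]

theorem transitive (k : ℕ) (hk : k ≤ 6) (K : Finset V8) (h : IsClique {1} K) (hc : K.card = k) :
    ∃ w : V8 ≃ₗ[ℝ] V8, Good w ∧ w '' (K : Set V8) = setR (SS.take k) := by
  induction k generalizing K with
  | zero =>
    rw [Finset.card_eq_zero] at hc
    subst hc
    exact ⟨_, Good.refl, by simp [setR]⟩
  | succ k ih =>
    obtain ⟨x, hx⟩ : K.Nonempty := Finset.card_pos.mp (by omega)
    obtain ⟨w, hw, hw1⟩ := ih (by omega) (K.erase x) (clique_mono h (Finset.erase_subset _ _))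
      (by rw [Finset.card_erase_of_mem hx]; omega)
    obtain ⟨l, hl, H⟩ := trans_aux h hx (take_len k) hw hw1
    obtain ⟨u, hu, hu1⟩ := H _ (nb_conn (by omega) hl)
    refine ⟨u, hu, ?_⟩
    rw [hu1, ← setR_cons]
    have hk' : k < SS.length := by simp [SS]; omega
    have ht : SS.take (k + 1) = SS.take k ++ [SS.getD k []] := by
      rw [List.getD_eq_getElem _ _ hk', List.take_append_getElem hk']
    rw [ht]
    ext v
    simp [setR, or_and_right, exists_or, or_comm]

theorem SS_take : SS.take 6 = SS := rfl

theorem transitive7 (K : Finset V8) (h : IsClique {1} K) (hc : K.card = 7) :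
    ∃ w : V8 ≃ₗ[ℝ] V8, Good w ∧
      (w '' (K : Set V8) = setR (va :: SS) ∨ w '' (K : Set V8) = setR (vb :: SS)) := by
  obtain ⟨x, hx⟩ : K.Nonempty := Finset.card_pos.mp (by omega)
  obtain ⟨w, hw, hw1⟩ := transitive 6 le_rfl (K.erase x) (clique_mono h (Finset.erase_subset _ _))
      (by rw [Finset.card_erase_of_mem hx]; omega)
  rw [SS_take] at hw1
  obtain ⟨l, hl, H⟩ := trans_aux h hx SS_len hw hw1
  have h1 := nb_sub
  rw [List.all_eq_true] at h1
  have h1 := h1 l hl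
  simp only [Bool.or_eq_true, beq_iff_eq] at h1
  rcases h1 with (rfl | rfl) | rfl
  · obtain ⟨u, hu, hu1⟩ := H _ (Conn.refl _ _)
    exact ⟨u, hu, Or.inl (by rw [hu1, setR_cons])⟩
  · obtain ⟨u, hu, hu1⟩ := H _ (Conn.refl _ _)
    exact ⟨u, hu, Or.inr (by rw [hu1, setR_cons])⟩
  · obtain ⟨u, hu, hu1⟩ := H (toR vb) (Conn.step (by rw [NB_setR _ SS_len]; exact ⟨_, hl, rfl⟩)
      (by rw [NB_setR _ SS_len]; exact ⟨_, nb_mem.1.2, rfl⟩)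
      (by rw [dot_toR rfl rfl]; norm_num [dotL, vb, vc]))
    exact ⟨u, hu, Or.inr (by rw [hu1, setR_cons])⟩

theorem double_count (A B : Set (Finset V8)) (k n : ℕ) (hA : A.Finite) (hB : B.Finite)
    (hBk : ∀ L ∈ B, L.card = k + 1) (hBA : ∀ L ∈ B, ∀ x ∈ L, L.erase x ∈ A)
    (hAk : ∀ K ∈ A, K.card = k)
    (hn : ∀ K ∈ A, {x | x ∉ K ∧ insert x K ∈ B}.ncard = n) :
    (k + 1) * B.ncard = n * A.ncard := by
  classical
  lift A to Finset (Finset V8) using hA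
  lift B to Finset (Finset V8) using hB
  simp only [SetLike.mem_coe] at *
  rw [Set.ncard_coe_finset, Set.ncard_coe_finset]
  have h := Finset.sum_card_bipartiteAbove_eq_sum_card_bipartiteBelow (s := A) (t := B)
    (fun K L => K ⊆ L)
  have h1 : ∀ K ∈ A, (Finset.bipartiteAbove (fun K L => K ⊆ L) B K).card = n := by
    intro K hK
    rw [← hn K hK, ← Set.ncard_coe_finset]
    symm
    apply Set.ncard_congr (fun x _ => insert x K)
    · rintro x ⟨-, hx⟩
      simp only [Finset.mem_coe, Finset.mem_bipartiteAbove]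
      exact ⟨hx, Finset.subset_insert _ _⟩
    · rintro x y ⟨hx, -⟩ - hxy
      have : x ∈ insert y K := by rw [← hxy]; simp
      rcases Finset.mem_insert.mp this with h | h
      · exact h
      · exact absurd h hx
    · intro L hL
      simp only [Finset.mem_coe, Finset.mem_bipartiteAbove] at hL
      have hc : (L \ K).card = 1 := by
        rw [Finset.card_sdiff_of_subset hL.2, hBk L hL.1, hAk K hK]; omega
      obtain ⟨x, hx⟩ := Finset.card_eq_one.mp hc
      have hx1 : x ∈ L \ K := by rw [hx]; simp
      have he : insert x K = L := by
        rw [Finset.insert_eq, ← hx, Finset.sdiff_union_of_subset hL.2]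
      exact ⟨x, ⟨(Finset.mem_sdiff.mp hx1).2, by rw [he]; exact hL.1⟩, he⟩
  have h2 : ∀ L ∈ B, (Finset.bipartiteBelow (fun K L => K ⊆ L) A L).card = k + 1 := by
    intro L hL
    rw [← hBk L hL]
    symm
    apply Finset.card_bij (fun x _ => L.erase x)
    · intro x hx
      rw [Finset.mem_bipartiteBelow]
      exact ⟨hBA L hL x hx, Finset.erase_subset _ _⟩
    · intro x hx y hy hxy
      by_contra hne
      have : x ∈ L.erase y := Finset.mem_erase.mpr ⟨hne, hx⟩
      rw [← hxy] at this
      exact Finset.notMem_erase _ _ this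
    · intro K hK
      rw [Finset.mem_bipartiteBelow] at hK
      have hc : (L \ K).card = 1 := by
        rw [Finset.card_sdiff_of_subset hK.2, hBk L hL, hAk K hK.1]; omega
      obtain ⟨x, hx⟩ := Finset.card_eq_one.mp hc
      have hx1 : x ∈ L \ K := by rw [hx]; simp
      refine ⟨x, (Finset.mem_sdiff.mp hx1).1, ?_⟩
      rw [← Finset.sdiff_singleton_eq_erase, ← hx, Finset.sdiff_sdiff_eq_self hK.2]
  rw [Finset.sum_congr rfl h1, Finset.sum_congr rfl h2] at h
  simp only [Finset.sum_const, smul_eq_mul] at h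
  linarith

def Cl (k : ℕ) : Set (Finset V8) := {K | IsClique {1} K ∧ K.card = k}
def Mx : Set (Finset V8) := {K | IsMaxClique {1} K ∧ K.card = 7}
def Nm : Set (Finset V8) := {K | IsClique {1} K ∧ K.card = 7 ∧ ¬IsMaxClique {1} K}

theorem fin_of_clique (A : Set (Finset V8)) (h : ∀ K ∈ A, IsClique {1} K) : A.Finite := by
  refine Set.Finite.subset (roots_finite.toFinset.powerset).finite_toSet ?_
  intro K hK
  simp only [Finset.mem_coe, Finset.mem_powerset]
  intro x hx
  simpa using (h K hK).1 x hx

theorem Cl_fin (k) : (Cl k).Finite := fin_of_clique _ fun _ h => h.1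
theorem Mx_fin : Mx.Finite := fin_of_clique _ fun _ h => h.1.1
theorem Nm_fin : Nm.Finite := fin_of_clique _ fun _ h => h.1

theorem NB_ncard {k : ℕ} (hk : k ≤ 6) {K : Finset V8} (h : K ∈ Cl k) :
    (NB (K : Set V8)).ncard = (nb (SS.take k)).length := by
  obtain ⟨w, hw, hw1⟩ := transitive k hk K h.1 h.2
  rw [← setR_ncard, ← NB_setR _ (take_len k), ← hw1, NB_image hw.weyl,
    Set.ncard_image_of_injective _ w.injective]

theorem Cl_step {k : ℕ} (hk : k ≤ 6) :
    (k + 1) * (Cl (k + 1)).ncard = (nb (SS.take k)).length * (Cl k).ncard := by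
  apply double_count _ _ _ _ (Cl_fin _) (Cl_fin _)
  · exact fun L hL => hL.2
  · intro L hL x hx
    exact ⟨clique_mono hL.1 (Finset.erase_subset _ _), by
      rw [Finset.card_erase_of_mem hx, hL.2]; rfl⟩
  · exact fun L hL => hL.2
  · intro K hK
    rw [← NB_ncard hk hK]
    congr 1
    ext x
    rw [← clique_insert hK.1]
    simp only [Cl, Set.mem_ofPred_eq]
    constructor
    · rintro ⟨h1, h2, -⟩; exact ⟨h1, h2⟩
    · rintro ⟨h1, h2⟩; exact ⟨h1, h2, by rw [Finset.card_insert_of_notMem h1, hK.2]⟩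

theorem nb_len' (k : ℕ) (hk : k < 7) :
    (nb (SS.take k)).length = [240, 56, 27, 16, 10, 6, 3].getD k 0 := by
  rw [← nb_len]
  simp [List.getD, hk]

theorem Cl6 : (Cl 6).ncard = 483840 := by
  have h0 : (Cl 0).ncard = 1 := by
    have : Cl 0 = {∅} := by
      ext K
      simp only [Cl, Set.mem_ofPred_eq, Set.mem_singleton_iff, Finset.card_eq_zero]
      constructor
      · exact fun h => h.2
      · rintro rfl; exact ⟨⟨by simp, by simp⟩, rfl⟩
    rw [this, Set.ncard_singleton]
  have s0 := Cl_step (k := 0) (by norm_num)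
  have s1 := Cl_step (k := 1) (by norm_num)
  have s2 := Cl_step (k := 2) (by norm_num)
  have s3 := Cl_step (k := 3) (by norm_num)
  have s4 := Cl_step (k := 4) (by norm_num)
  have s5 := Cl_step (k := 5) (by norm_num)
  rw [nb_len' _ (by norm_num)] at s0 s1 s2 s3 s4 s5
  simp at s0 s1 s2 s3 s4 s5
  omega

def MM (K : Set V8) : Set V8 := {x | x ∈ NB K ∧ NB (insert x K) = ∅}

theorem MM_image {w : V8 ≃ₗ[ℝ] V8} (h : IsWeyl w) (K : Set V8) : MM (w '' K) = w '' MM K := by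
  ext x
  obtain ⟨x, rfl⟩ := w.surjective x
  simp only [MM, Set.mem_ofPred_eq]
  rw [w.injective.mem_set_image, NB_image h, w.injective.mem_set_image, ← Set.image_insert_eq,
    NB_image h, Set.image_eq_empty]
  rfl

theorem cons_len {x : List ℤ} (hx : x.length = 8) : ∀ s ∈ x :: SS, s.length = 8 := by
  intro s hs
  rcases List.mem_cons.mp hs with rfl | hs
  · exact hx
  · exact SS_len s hs

theorem NB_va : NB (setR (va :: SS)) = ∅ := by
  rw [NB_setR _ (cons_len rfl), nb_va]; simp [setR]
theorem NB_vb : NB (setR (vb :: SS)) = {toR vc} := by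
  rw [NB_setR _ (cons_len rfl), nb_vb]; ext; simp [setR, eq_comm]
theorem NB_vc : NB (setR (vc :: SS)) = {toR vb} := by
  rw [NB_setR _ (cons_len rfl), nb_vc]; ext; simp [setR, eq_comm]

theorem MM_SS : MM (setR SS) = {toR va} := by
  ext x
  simp only [MM, Set.mem_ofPred_eq, Set.mem_singleton_iff]
  rw [NB_setR _ SS_len]
  constructor
  · rintro ⟨⟨l, hl, rfl⟩, h⟩
    rw [← setR_cons] at h
    have h1 := nb_sub
    rw [List.all_eq_true] at h1
    have h1 := h1 l hl
    simp only [Bool.or_eq_true, beq_iff_eq] at h1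
    rcases h1 with (rfl | rfl) | rfl
    · rfl
    · rw [NB_vb] at h; simp at h
    · rw [NB_vc] at h; simp at h
  · rintro rfl
    exact ⟨⟨_, nb_mem.1.1, rfl⟩, by rw [← setR_cons, NB_va]⟩

theorem MM_ncard {K : Finset V8} (h : K ∈ Cl 6) : (MM (K : Set V8)).ncard = 1 := by
  obtain ⟨w, hw, hw1⟩ := transitive 6 le_rfl K h.1 h.2
  rw [← Set.ncard_image_of_injective _ w.injective, ← MM_image hw.weyl, hw1, SS_take, MM_SS,
    Set.ncard_singleton]

theorem Mx_card : 7 * Mx.ncard = 483840 := by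
  have : (6 + 1) * Mx.ncard = 1 * (Cl 6).ncard := by
    apply double_count _ _ _ _ (Cl_fin _) Mx_fin
    · exact fun L hL => hL.2
    · intro L hL x hx
      exact ⟨clique_mono hL.1.1 (Finset.erase_subset _ _), by
        rw [Finset.card_erase_of_mem hx, hL.2]⟩
    · exact fun L hL => hL.2
    · intro K hK
      rw [← MM_ncard hK]
      congr 1
      ext x
      simp only [MM, Mx, Set.mem_ofPred_eq]
      rw [← clique_insert hK.1, max_iff, Finset.coe_insert]
      constructor
      · rintro ⟨h1, ⟨h2, h3⟩, -⟩; exact ⟨⟨h1, h2⟩, h3⟩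
      · rintro ⟨⟨h1, h2⟩, h3⟩; exact ⟨h1, ⟨h2, h3⟩, by rw [Finset.card_insert_of_notMem h1, hK.2]⟩
  rw [Cl6] at this
  omega

theorem Nm_card : 7 * Nm.ncard = 2 * 483840 := by
  have h7 := Cl_step (k := 6) le_rfl
  rw [nb_len' _ (by norm_num), Cl6] at h7
  simp at h7
  have hu : Cl 7 = Mx ∪ Nm := by
    ext K
    simp only [Cl, Mx, Nm, Set.mem_union, Set.mem_ofPred_eq]
    constructor
    · rintro ⟨h1, h2⟩
      by_cases h : IsMaxClique {1} K
      · exact Or.inl ⟨h, h2⟩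
      · exact Or.inr ⟨h1, h2, h⟩
    · rintro (⟨h1, h2⟩ | ⟨h1, h2, h3⟩)
      · exact ⟨h1.1, h2⟩
      · exact ⟨h1, h2⟩
  have hd : Disjoint Mx Nm := by
    rw [Set.disjoint_left]
    exact fun K h1 h2 => h2.2.2 h1.1
  rw [hu, Set.ncard_union_eq hd Mx_fin Nm_fin] at h7
  have := Mx_card
  omega

theorem max_image {w : V8 ≃ₗ[ℝ] V8} (h : IsWeyl w) {K : Finset V8} (hK : IsClique {1} K) :
    IsMaxClique {1} K ↔ NB (w '' (K : Set V8)) = ∅ := by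
  rw [max_iff, NB_image h, Set.image_eq_empty]
  exact ⟨fun h => h.2, fun h => ⟨hK, h⟩⟩

/-- canonical forms -/
theorem canon {K : Finset V8} (hK : IsClique {1} K) (hc : K.card = 7) :
    (IsMaxClique {1} K ∧ ∃ w : V8 ≃ₗ[ℝ] V8, Good w ∧ w '' (K : Set V8) = setR (va :: SS)) ∨
    (¬ IsMaxClique {1} K ∧ ∃ w : V8 ≃ₗ[ℝ] V8, Good w ∧ w '' (K : Set V8) = setR (vb :: SS)) := by
  obtain ⟨w, hw, h | h⟩ := transitive7 K hK hc
  · left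
    refine ⟨?_, w, hw, h⟩
    rw [max_image hw.weyl hK, h, NB_va]
  · right
    refine ⟨?_, w, hw, h⟩
    rw [max_image hw.weyl hK, h, NB_vb]
    simp

theorem NB_Nm {K : Finset V8} (h : K ∈ Nm) : (NB (K : Set V8)).ncard = 1 := by
  rcases canon h.1 h.2.1 with ⟨h1, -⟩ | ⟨-, w, hw, hw1⟩
  · exact absurd h1 h.2.2
  · rw [← Set.ncard_image_of_injective _ w.injective, ← NB_image hw.weyl, hw1, NB_vb,
      Set.ncard_singleton]

theorem erase_Nm {L : Finset V8} (hL : L ∈ Cl 8) {x : V8} (hx : x ∈ L) : L.erase x ∈ Nm := by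
  refine ⟨clique_mono hL.1 (Finset.erase_subset _ _), by
      rw [Finset.card_erase_of_mem hx, hL.2], ?_⟩
  rw [max_iff]
  rintro ⟨-, h⟩
  have := mem_NB_erase hL.1 hx
  rw [h] at this
  exact this

theorem Cl8_card : 8 * (Cl 8).ncard = Nm.ncard := by
  have : (7 + 1) * (Cl 8).ncard = 1 * Nm.ncard := by
    apply double_count _ _ _ _ Nm_fin (Cl_fin _)
    · exact fun L hL => hL.2
    · exact fun L hL x hx => erase_Nm hL hx
    · exact fun L hL => hL.2.1
    · intro K hK
      rw [← NB_Nm hK]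
      congr 1
      ext x
      rw [← clique_insert hK.1]
      simp only [Cl, Set.mem_ofPred_eq]
      constructor
      · rintro ⟨h1, h2, -⟩; exact ⟨h1, h2⟩
      · rintro ⟨h1, h2⟩; exact ⟨h1, h2, by rw [Finset.card_insert_of_notMem h1, hK.2.1]⟩
  omega

theorem size_max {K : Finset V8} (h : IsMaxClique {1} K) : K.card = 7 ∨ K.card = 8 := by
  by_contra hne
  rcases Nat.lt_or_ge K.card 7 with hlt | hge
  · have h1 := NB_ncard (k := K.card) (by omega) ⟨h.1, rfl⟩
    rw [((max_iff K).mp h).2, Set.ncard_empty, nb_len' _ hlt] at h1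
    generalize K.card = k at *
    interval_cases k <;> simp at h1
  · obtain ⟨T, hT, hTc⟩ := Finset.exists_subset_card_eq (s := K) (n := 9) (by omega)
    have hTcl := clique_mono h.1 hT
    obtain ⟨M, hM, hMc⟩ := Finset.exists_subset_card_eq (s := T) (n := 7) (by omega)
    have hMcl := clique_mono hTcl hM
    have hsub : ((T \ M : Finset V8) : Set V8) ⊆ NB (M : Set V8) := by
      intro x hx
      simp only [Finset.mem_coe, Finset.mem_sdiff] at hx
      exact (clique_insert hMcl).mp ⟨hx.2, clique_mono hTcl (Finset.insert_subset hx.1 hM)⟩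
    have hfin : (NB (M : Set V8)).Finite := roots_finite.subset fun x hx => hx.1
    have h2 := Set.ncard_le_ncard hsub hfin
    rw [Set.ncard_coe_finset, Finset.card_sdiff_of_subset hM, hTc, hMc] at h2
    by_cases hmax : IsMaxClique {1} M
    · rw [((max_iff M).mp hmax).2, Set.ncard_empty] at h2
      omega
    · rw [NB_Nm ⟨hMcl, hMc, hmax⟩] at h2
      omega

theorem orbits {K1 K2 : Finset V8} (h1 : IsClique {1} K1) (c1 : K1.card = 7)
    (h2 : IsClique {1} K2) (c2 : K2.card = 7) :
    (∃ w : V8 ≃ₗ[ℝ] V8, IsWeyl w ∧ ⇑w '' (K1 : Set V8) = (K2 : Set V8)) ↔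
        (IsMaxClique {1} K1 ↔ IsMaxClique {1} K2) := by
  constructor
  · rintro ⟨w, hw, h⟩
    rw [max_image hw h1, h, max_iff]
    exact ⟨fun h => ⟨h2, h⟩, fun h => h.2⟩
  · intro h
    have key : ∀ S, (∃ w : V8 ≃ₗ[ℝ] V8, Good w ∧ w '' (K1 : Set V8) = S) →
        (∃ w : V8 ≃ₗ[ℝ] V8, Good w ∧ w '' (K2 : Set V8) = S) →
        ∃ w : V8 ≃ₗ[ℝ] V8, IsWeyl w ∧ ⇑w '' (K1 : Set V8) = (K2 : Set V8) := by
      rintro S ⟨u, hu, hu1⟩ ⟨w, hw, hw1⟩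
      refine ⟨u.trans w.symm, (hu.trans hw.symm).weyl, ?_⟩
      have : ⇑(u.trans w.symm) '' (K1 : Set V8) = w.symm '' (u '' (K1 : Set V8)) := by
        rw [← Set.image_comp]; rfl
      rw [this, hu1, ← hw1, ← Set.image_comp]
      ext x; simp
    rcases canon h1 c1 with ⟨m1, e1⟩ | ⟨m1, e1⟩ <;> rcases canon h2 c2 with ⟨m2, e2⟩ | ⟨m2, e2⟩
    · exact key _ e1 e2
    · exact absurd (h.mp m1) m2
    · exact absurd (h.mpr m2) m1
    · exact key _ e1 e2

theorem sum_image {K : Finset V8} {w : V8 ≃ₗ[ℝ] V8} {S : List (List ℤ)} (hS : ∀ s ∈ S, s.length = 8)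
    (hd : S.Nodup) (h : w '' (K : Set V8) = setR S) : w (∑ e ∈ K, e) = (S.map toR).sum := by
  classical
  have hn : (S.map toR).Nodup := hd.map_on fun x hx y hy e => toR_inj (hS x hx) (hS y hy) e
  have h1 : K.image w = (S.map toR).toFinset := by
    apply Finset.coe_injective
    rw [Finset.coe_image, h]
    ext x; simp [setR]
  have h2 : ∑ e ∈ K.image w, e = ∑ e ∈ K, w e := Finset.sum_image fun x _ y _ e => w.injective e
  rw [map_sum, ← h2, h1, List.sum_toFinset _ hn, List.map_map]
  rfl

theorem two_lambda {K : Finset V8} (hK : IsClique {1} K) (hc : K.card = 7) :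
    (IsMaxClique {1} K ↔ ∃ x, inLambda x ∧ (∑ e ∈ K, e) = (2 : ℝ) • x) := by
  have key : ∀ w : V8 ≃ₗ[ℝ] V8, Good w → ((∃ x, inLambda x ∧ (∑ e ∈ K, e) = (2 : ℝ) • x) ↔
      ∃ x, inLambda x ∧ w (∑ e ∈ K, e) = (2 : ℝ) • x) := by
    intro w hw
    constructor
    · rintro ⟨x, hx, h⟩
      exact ⟨w x, (hw.2 x).mpr hx, by rw [h, map_smul]⟩
    · rintro ⟨x, hx, h⟩
      refine ⟨w.symm x, (hw.symm.2 x).mpr hx, ?_⟩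
      rw [← map_smul, ← h, LinearEquiv.symm_apply_apply]
  rcases canon hK hc with ⟨m, w, hw, h⟩ | ⟨m, w, hw, h⟩
  · refine iff_of_true m ?_
    rw [key w hw, sum_image (cons_len rfl) (by decide) h]
    refine ⟨toR [7,1,1,1,1,1,1,-1], ⟨Or.inr ?_, 3, ?_⟩, ?_⟩
    · intro i
      have : ∀ i : Fin 8, ([7,1,1,1,1,1,1,-1] : List ℤ).getD i.val 0 =
        2 * (([7,1,1,1,1,1,1,-1] : List ℤ).getD i.val 0 / 2) + 1 := by decide
      refine ⟨([7,1,1,1,1,1,1,-1] : List ℤ).getD i.val 0 / 2, ?_⟩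
      have h1 := this i
      simp only [toR]
      generalize ([7,1,1,1,1,1,1,-1] : List ℤ).getD i.val 0 = z at *
      have h2 : (z : ℝ) = 2 * ((z / 2 : ℤ) : ℝ) + 1 := by exact_mod_cast h1
      linarith
    · simp [toR, Fin.sum_univ_eight]; norm_num
    · funext i
      fin_cases i <;> simp [toR, va, SS] <;> norm_num
  · refine iff_of_false m ?_
    rw [key w hw, sum_image (cons_len rfl) (by decide) h]
    rintro ⟨x, ⟨-, n, hn⟩, hx⟩
    have h1 : ∑ i, ((vb :: SS).map toR).sum i = ∑ i, 2 * x i := by rw [hx]; rfl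
    rw [← Finset.mul_sum, hn] at h1
    simp [toR, vb, SS, Fin.sum_univ_eight] at h1
    norm_num at h1
    have h2 : (14 : ℤ) = 2 * (2 * n) := by exact_mod_cast h1
    omega

/-- (i) Every maximal clique in `Γ_1` has size 7 or 8; (ii) the
cliques of size 7 in `Γ_1` form exactly two `W`-orbits: the non-maximal ones
(138240 of them) and the maximal ones (69120 of them), and a size-7 clique in
`Γ_1` is maximal iff its elements sum to a vector in `2Λ`; (iii) there are exactly
17280 cliques of size 8 in `Γ_1`. -/
theorem stmt_15 :
    (∀ K : Finset (Fin 8 → ℝ), IsMaxClique {1} K → K.card = 7 ∨ K.card = 8) ∧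
    ({K : Finset (Fin 8 → ℝ) |
        IsClique {1} K ∧ K.card = 7 ∧ ¬IsMaxClique {1} K}.ncard = 138240) ∧
    ({K : Finset (Fin 8 → ℝ) | IsMaxClique {1} K ∧ K.card = 7}.ncard = 69120) ∧
    (∀ K1 K2 : Finset (Fin 8 → ℝ),
      IsClique {1} K1 → K1.card = 7 → IsClique {1} K2 → K2.card = 7 →
      ((∃ w : (Fin 8 → ℝ) ≃ₗ[ℝ] (Fin 8 → ℝ), IsWeyl w ∧
          ⇑w '' (K1 : Set (Fin 8 → ℝ)) = (K2 : Set (Fin 8 → ℝ))) ↔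
        (IsMaxClique {1} K1 ↔ IsMaxClique {1} K2))) ∧
    (∀ K : Finset (Fin 8 → ℝ), IsClique {1} K → K.card = 7 →
      (IsMaxClique {1} K ↔ ∃ x, inLambda x ∧ (∑ e ∈ K, e) = (2 : ℝ) • x)) ∧
    ({K : Finset (Fin 8 → ℝ) | IsClique {1} K ∧ K.card = 8}.ncard = 17280) := by
  refine ⟨fun K h => size_max h, ?_, ?_, fun K1 K2 h1 c1 h2 c2 => orbits h1 c1 h2 c2,
    fun K h c => two_lambda h c, ?_⟩
  · have := Nm_card
    change Nm.ncard = _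
    omega
  · have := Mx_card
    change Mx.ncard = _
    omega
  · have := Nm_card
    have := Cl8_card
    change (Cl 8).ncard = _
    omega
end
end

section
/- Let H be a finite group acting on a finite set X, and consider the induced action of H on the subsets of X. Let A and S be subsets of X, and let m be the number of H-conjugates of A that are contained in S. Then the number of H-conjugates of S that contain A equals m·|H_A|/|H_S|. -/
open scoped Pointwise

theorem count_aux {H Y : Type*} [Group H] [MulAction H Y] (y : Y) (P : Y → Prop) :
    Nat.card {h : H // P (h • y)} =
      {t : Y | (∃ h : H, h • y = t) ∧ P t}.ncard * Nat.card (MulAction.stabilizer H y) := by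
  rw [← Nat.card_coe_set_eq, ← Nat.card_prod]
  symm
  have hg : ∀ t : {t : Y | (∃ h : H, h • y = t) ∧ P t}, ∃ h : H, h • y = t := fun t => t.2.1
  choose g hg using hg
  have key : ∀ (t : {t : Y | (∃ h : H, h • y = t) ∧ P t}) (s : MulAction.stabilizer H y),
      (g t * (s : H)) • y = t := by
    intro t s
    rw [mul_smul, MulAction.mem_stabilizer_iff.1 s.2, hg]
  refine Nat.card_eq_of_bijective
    (fun p => ⟨g p.1 * (p.2 : H), by rw [key]; exact p.1.2.2⟩) ⟨?_, ?_⟩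
  · rintro ⟨t, s⟩ ⟨t', s'⟩ h
    have h1 : g t * (s : H) = g t' * (s' : H) := congrArg Subtype.val h
    have h2 : t = t' := Subtype.ext (by rw [← key t s, ← key t' s', h1])
    subst h2
    have h3 : s = s' := Subtype.ext (mul_left_cancel h1)
    rw [h3]
  · rintro ⟨h, hP⟩
    let t : {t : Y | (∃ h : H, h • y = t) ∧ P t} := ⟨h • y, ⟨h, rfl⟩, hP⟩
    refine ⟨(t, ⟨(g t)⁻¹ * h, ?_⟩), ?_⟩
    · rw [MulAction.mem_stabilizer_iff, mul_smul, inv_smul_eq_iff, hg]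
    · apply Subtype.ext
      simp

/-- Let `H` be a finite group acting on a finite set `X`, and let
`A, S ⊆ X`. If `m` is the number of `H`-conjugates of `A` contained in `S`, then
the number of `H`-conjugates of `S` containing `A` equals `m·|H_A|/|H_S|`. -/
theorem stmt_19 {H X : Type*} [Group H] [Finite H] [Finite X] [MulAction H X]
    (A S : Set X) :
    ({T : Set X | (∃ h : H, h • S = T) ∧ A ⊆ T}.ncard : ℚ) =
      ({T : Set X | (∃ h : H, h • A = T) ∧ T ⊆ S}.ncard : ℚ) *
        (Nat.card (MulAction.stabilizer H A) : ℚ) /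
        (Nat.card (MulAction.stabilizer H S) : ℚ) := by
  have h0 : (Nat.card (MulAction.stabilizer H S) : ℚ) ≠ 0 :=
    Nat.cast_ne_zero.2 Nat.card_pos.ne'
  rw [eq_div_iff h0]
  have h1 := count_aux (H := H) S (fun T => A ⊆ T)
  have h2 := count_aux (H := H) A (fun T => T ⊆ S)
  have h3 : Nat.card {h : H // A ⊆ h • S} = Nat.card {h : H // h • A ⊆ S} :=
    Nat.card_congr ((Equiv.inv H).subtypeEquiv fun h => by
      simpa using Set.subset_smul_set_iff)
  exact_mod_cast h1.symm.trans (h3.trans h2)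
end
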